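/- Let A be a linear relation in a complex vector space H, let λ_1, …, λ_l ∈ ℂ be pairwise distinct, and let μ ∈ ℂ with μ ∉ {λ_1, …, λ_l}. Suppose x^1, …, x^l ∈ H satisfy x^r ∈ R_{λ_r}(A) for r = 1, …, l and Σ_{r=1}^{l} x^r ∈ R_μ(A). Then x^r ∈ R_c(A) for every r = 1, …, l. -/

import Mathlib

/-!
Write `x → y` for `(x, y) ∈ A`. The subspace `N = R_∞(A)` is closed under successors, so `A` induces
a single-valued partial operator on `H ⧸ N`. Generalized eigenvectors of a partial operator at
distinct points are linearly independent, by the usual argument (`LinRel.mem_of_sum_mem`). Applied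
to the vectors `x^r` and `-∑ x^r`, at the distinct points `λ_r` and `μ`, whose sum is zero, it gives
`x^r ∈ R_∞(A)` for every `r`.

It remains to see that `R_λ(A) ∩ R_∞(A) ⊆ R_0(A)` (`LinRel.mem_singChain_of_mem`), that is, that
translating a relation changes neither `R_∞` nor `R_c`. Both rest on one device,
`LinRel.exists_twist`: from a chain `0 → u₁ → u₂ → ⋯` the sums `vᵢ = ∑_{j ≤ i} c^(i-j) uⱼ` form
another chain, in which `vᵢ → uᵢ₊₁ + c vᵢ`, so that `(vᵢ, uᵢ₊₁)` belongs to `A - c`.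
-/

open Submodule Set

variable {H : Type*} [AddCommGroup H] [Module ℂ H]

/-- A linear relation in `H`: a linear subspace of the product `H × H`. -/
abbrev LinRel (H : Type*) [AddCommGroup H] [Module ℂ H] : Type _ := Submodule ℂ (H × H)

namespace LinRel

/-- The relation `A - λ = {(x, y - λ x) : (x,y) ∈ A}`. -/
def shift (A : LinRel H) (lam : ℂ) : LinRel H :=
  A.map ((LinearMap.fst ℂ H H).prod (LinearMap.snd ℂ H H - lam • LinearMap.fst ℂ H H))

/-- The relation `λ A = {(x, λ y) : (x,y) ∈ A}`. -/
def smulRel (lam : ℂ) (A : LinRel H) : LinRel H :=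
  A.map ((LinearMap.fst ℂ H H).prod (lam • LinearMap.snd ℂ H H))

/-- The inverse relation `A⁻¹ = {(y,x) : (x,y) ∈ A}`. -/
def inv (A : LinRel H) : LinRel H :=
  A.map ((LinearMap.snd ℂ H H).prod (LinearMap.fst ℂ H H))

/-- The product (composition) `A B = {(x,y) : ∃ z, (x,z) ∈ B ∧ (z,y) ∈ A}`. -/
def comp (A B : LinRel H) : LinRel H where
  carrier := {p | ∃ z, (p.1, z) ∈ B ∧ (z, p.2) ∈ A}
  zero_mem' := ⟨0, B.zero_mem, A.zero_mem⟩
  add_mem' := by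
    rintro p q ⟨z1, h1, h2⟩ ⟨z2, h3, h4⟩
    exact ⟨z1 + z2, B.add_mem h1 h3, A.add_mem h2 h4⟩
  smul_mem' := by
    rintro c p ⟨z, h1, h2⟩
    exact ⟨c • z, B.smul_mem c h1, A.smul_mem c h2⟩

/-- The identity relation `I = {(x,x) : x ∈ H}`. -/
def idRel : LinRel H := LinearMap.graph (LinearMap.id : H →ₗ[ℂ] H)

/-- Powers: `A⁰ = I` and `Aᵏ = A · Aᵏ⁻¹`. -/
def pow (A : LinRel H) : ℕ → LinRel H
  | 0 => idRel
  | (k+1) => comp A (pow A k)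

/-- The kernel `ker A = {x : (x,0) ∈ A}`. -/
def ker (A : LinRel H) : Submodule ℂ H := A.comap (LinearMap.inl ℂ H H)

/-- The multivalued part `mul A = {y : (0,y) ∈ A}`. -/
def mul (A : LinRel H) : Submodule ℂ H := A.comap (LinearMap.inr ℂ H H)

lemma mem_ker {A : LinRel H} {x : H} : x ∈ ker A ↔ (x, (0:H)) ∈ A := by
  simp [ker, Submodule.mem_comap]

lemma mem_mul {A : LinRel H} {y : H} : y ∈ mul A ↔ ((0:H), y) ∈ A := by
  simp [mul, Submodule.mem_comap]

lemma ker_pow_le_succ (A : LinRel H) (i : ℕ) : ker (pow A i) ≤ ker (pow A (i+1)) := by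
  intro x hx
  rw [mem_ker] at hx ⊢
  exact ⟨0, hx, A.zero_mem⟩

lemma ker_pow_mono (A : LinRel H) : Monotone fun i => ker (pow A i) :=
  monotone_nat_of_le_succ (ker_pow_le_succ A)

lemma mul_pow_le_succ (A : LinRel H) : ∀ i, mul (pow A i) ≤ mul (pow A (i+1)) := by
  intro i
  induction i with
  | zero =>
    intro y hy
    rw [mem_mul] at hy ⊢
    have : y = 0 := by simpa [pow, idRel, LinearMap.mem_graph_iff] using hy
    subst this
    exact Submodule.zero_mem _
  | succ i ih =>
    intro y hy
    rw [mem_mul] at hy ⊢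
    obtain ⟨w, hw, hwy⟩ := hy
    exact ⟨w, mem_mul.mp (ih (mem_mul.mpr hw)), hwy⟩

lemma mul_pow_mono (A : LinRel H) : Monotone fun i => mul (pow A i) :=
  monotone_nat_of_le_succ (mul_pow_le_succ A)

/-- The root space `R_λ(A) = ⋃_{i ≥ 1} ker (A - λ)ⁱ`. -/
def rootSpace (A : LinRel H) (lam : ℂ) : Submodule ℂ H where
  carrier := ⋃ i : ℕ, (ker (pow (shift A lam) (i+1)) : Set H)
  zero_mem' := Set.mem_iUnion.2 ⟨0, Submodule.zero_mem _⟩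
  add_mem' := by
    intro a b ha hb
    obtain ⟨i, hi⟩ := Set.mem_iUnion.1 ha
    obtain ⟨j, hj⟩ := Set.mem_iUnion.1 hb
    exact Set.mem_iUnion.2 ⟨max i j, Submodule.add_mem _
      (ker_pow_mono _ (by omega : i + 1 ≤ max i j + 1) hi)
      (ker_pow_mono _ (by omega : j + 1 ≤ max i j + 1) hj)⟩
  smul_mem' := by
    intro c a ha
    obtain ⟨i, hi⟩ := Set.mem_iUnion.1 ha
    exact Set.mem_iUnion.2 ⟨i, Submodule.smul_mem _ c hi⟩

/-- The root space at infinity `R_∞(A) = ⋃_{i ≥ 1} mul Aⁱ`. -/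
def rootInf (A : LinRel H) : Submodule ℂ H where
  carrier := ⋃ i : ℕ, (mul (pow A (i+1)) : Set H)
  zero_mem' := Set.mem_iUnion.2 ⟨0, Submodule.zero_mem _⟩
  add_mem' := by
    intro a b ha hb
    obtain ⟨i, hi⟩ := Set.mem_iUnion.1 ha
    obtain ⟨j, hj⟩ := Set.mem_iUnion.1 hb
    exact Set.mem_iUnion.2 ⟨max i j, Submodule.add_mem _
      (mul_pow_mono _ (by omega : i + 1 ≤ max i j + 1) hi)
      (mul_pow_mono _ (by omega : j + 1 ≤ max i j + 1) hj)⟩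
  smul_mem' := by
    intro c a ha
    obtain ⟨i, hi⟩ := Set.mem_iUnion.1 ha
    exact Set.mem_iUnion.2 ⟨i, Submodule.smul_mem _ c hi⟩

/-- The singular chain space `R_c(A) = R_0(A) ∩ R_∞(A)`. -/
def singChain (A : LinRel H) : Submodule ℂ H := rootSpace A 0 ⊓ rootInf A

/-- The root space at a point of `ℂ ∪ {∞}` (modelled as `Option ℂ`, with `none = ∞`). -/
def rootSpaceE (A : LinRel H) : Option ℂ → Submodule ℂ H
  | none => rootInf A
  | some lam => rootSpace A lam

/-- `λ ∈ ℂ ∪ {∞}` is an eigenvalue of `A`. -/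
def isEigenvalue (A : LinRel H) : Option ℂ → Prop
  | none => mul A ≠ ⊥
  | some lam => ker (shift A lam) ≠ ⊥

end LinRel

namespace LinRel

/-! ### Powers and root spaces -/

lemma mem_shift {A : LinRel H} {c : ℂ} {x y : H} :
    (x, y) ∈ shift A c ↔ (x, y + c • x) ∈ A := by
  simp only [shift, Submodule.mem_map]
  constructor
  · rintro ⟨⟨a, b⟩, hab, h⟩
    obtain ⟨rfl, rfl⟩ : a = x ∧ b - c • a = y := Prod.mk.injEq .. ▸ h
    simpa using hab
  · intro h
    exact ⟨_, h, by simp⟩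

lemma mem_pow_zero {A : LinRel H} {x y : H} : (x, y) ∈ pow A 0 ↔ y = x := by
  simp [pow, idRel, LinearMap.mem_graph_iff]

lemma mem_pow_succ {A : LinRel H} {n : ℕ} {x y : H} :
    (x, y) ∈ pow A (n + 1) ↔ ∃ z, (x, z) ∈ pow A n ∧ (z, y) ∈ A := Iff.rfl

/-- The defining recursion peels off the last step of a chain; this one peels off the first. -/
lemma mem_pow_succ_left {A : LinRel H} {n : ℕ} {x y : H} :
    (x, y) ∈ pow A (n + 1) ↔ ∃ z, (x, z) ∈ A ∧ (z, y) ∈ pow A n := by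
  induction n generalizing y with
  | zero => simp [mem_pow_succ, mem_pow_zero]
  | succ n ih =>
    rw [mem_pow_succ]
    constructor
    · rintro ⟨w, hw, hwy⟩
      obtain ⟨z, hz, hzw⟩ := ih.1 hw
      exact ⟨z, hz, w, hzw, hwy⟩
    · rintro ⟨z, hz, w, hzw, hwy⟩
      exact ⟨w, ih.2 ⟨z, hz, hzw⟩, hwy⟩

lemma mem_rootSpace {A : LinRel H} {c : ℂ} {x : H} :
    x ∈ rootSpace A c ↔ ∃ n, (x, (0 : H)) ∈ pow (shift A c) n := by
  constructor
  · intro h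
    obtain ⟨i, hi⟩ := Set.mem_iUnion.1 h
    exact ⟨i + 1, hi⟩
  · rintro ⟨n, hn⟩
    exact Set.mem_iUnion.2 ⟨n, ker_pow_le_succ _ n hn⟩

lemma mem_rootInf {A : LinRel H} {y : H} :
    y ∈ rootInf A ↔ ∃ n, ((0 : H), y) ∈ pow A n := by
  constructor
  · intro h
    obtain ⟨i, hi⟩ := Set.mem_iUnion.1 h
    exact ⟨i + 1, hi⟩
  · rintro ⟨n, hn⟩
    exact Set.mem_iUnion.2 ⟨n, mul_pow_le_succ _ n hn⟩

lemma rootInf_step {A : LinRel H} {x y : H} (hxy : (x, y) ∈ A) (hx : x ∈ rootInf A) :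
    y ∈ rootInf A := by
  obtain ⟨n, hn⟩ := mem_rootInf.1 hx
  exact mem_rootInf.2 ⟨n + 1, x, hn, hxy⟩

lemma rootSpace_step {A : LinRel H} {c : ℂ} {x y : H} (hxy : (x, y + c • x) ∈ A)
    (hy : y ∈ rootSpace A c) : x ∈ rootSpace A c := by
  obtain ⟨n, hn⟩ := mem_rootSpace.1 hy
  exact mem_rootSpace.2 ⟨n + 1, mem_pow_succ_left.2 ⟨y, mem_shift.2 hxy, hn⟩⟩

lemma exists_rootSpace_step {A : LinRel H} {c : ℂ} {x : H} (hx : x ∈ rootSpace A c) :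
    ∃ z ∈ rootSpace A c, (x, z + c • x) ∈ A := by
  obtain ⟨n, hn⟩ := mem_rootSpace.1 hx
  obtain ⟨z, hz, hz0⟩ := mem_pow_succ_left.1 (ker_pow_le_succ _ n hn)
  exact ⟨z, mem_rootSpace.2 ⟨n, hz0⟩, mem_shift.1 hz⟩

/-! ### Changing the base point of chains that start at zero -/

/-- If `0 → u₁ → ⋯ → uₙ₊₁ = u` is a chain, the sums `vᵢ = ∑_{j ≤ i} c^(i-j) uⱼ` again form a chain
starting at `0`, and a further step `u → z` becomes `vₙ₊₁ → z + c vₙ₊₁`, a step `vₙ₊₁ → z` of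
`B - c`. Here `v = vₙ₊₁` and `w = vₙ`. -/
lemma exists_twist {B : LinRel H} (c : ℂ) (n : ℕ) :
    ∀ u z : H, ((0 : H), u) ∈ pow B (n + 1) → (u, z) ∈ B →
      ∃ v w : H, v = u + c • w ∧ ((0 : H), w) ∈ pow B n ∧ (w, v) ∈ B ∧ (v, z + c • v) ∈ B := by
  induction n with
  | zero =>
    intro u z hu hz
    obtain ⟨u', hu', h⟩ := hu
    obtain rfl := mem_pow_zero.1 hu'
    refine ⟨u, 0, by simp, mem_pow_zero.2 rfl, h, ?_⟩
    have := B.add_mem hz (B.smul_mem c h)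
    simpa using this
  | succ n ih =>
    intro u z hu hz
    obtain ⟨u', hu', h⟩ := hu
    obtain ⟨v, w, -, hw, hwv, hv⟩ := ih u' u hu' h
    refine ⟨u + c • v, v, rfl, ⟨w, hw, hwv⟩, hv, ?_⟩
    exact B.add_mem hz (B.smul_mem c hv)

/-- Suppose `K` is closed under predecessors for `B - c`. If `x` is reached from `0` by a `B`-chain
and has a `B`-successor in `K`, then `x ∈ K`. -/
lemma mem_of_succ_mem {B : LinRel H} {c : ℂ} {K : Submodule ℂ H}
    (hK : ∀ x y, (x, y + c • x) ∈ B → y ∈ K → x ∈ K) (n : ℕ) :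
    ∀ x z : H, ((0 : H), x) ∈ pow B n → (x, z) ∈ B → z ∈ K → x ∈ K := by
  induction n with
  | zero =>
    intro x z hx _ _
    rw [mem_pow_zero.1 hx]
    exact K.zero_mem
  | succ n ih =>
    intro x z hx hxz hz
    obtain ⟨v, w, hvw, hw, hwv, hv⟩ := exists_twist c n x z hx hxz
    have hvK := hK v z hv hz
    have hwK := ih w v hw hwv hvK
    rw [eq_sub_of_add_eq hvw.symm]
    exact K.sub_mem hvK (K.smul_mem c hwK)

lemma mem_of_singular {B : LinRel H} {c : ℂ} {K : Submodule ℂ H}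
    (hK : ∀ x y, (x, y + c • x) ∈ B → y ∈ K → x ∈ K) (m : ℕ) :
    ∀ (n : ℕ) (x : H), ((0 : H), x) ∈ pow B n → (x, (0 : H)) ∈ pow B m → x ∈ K := by
  induction m with
  | zero =>
    intro n x _ hx
    rw [← mem_pow_zero.1 hx]
    exact K.zero_mem
  | succ m ih =>
    intro n x hn hm
    obtain ⟨z, hxz, hz⟩ := mem_pow_succ_left.1 hm
    exact mem_of_succ_mem hK n x z hn hxz (ih (n + 1) z ⟨x, hn, hxz⟩ hz)

/-- The root space at infinity is contained in that of every translate of the relation. -/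
lemma rootInf_le_shift (A : LinRel H) (c : ℂ) : rootInf A ≤ rootInf (shift A c) := by
  have key : ∀ (n : ℕ) (x : H), ((0 : H), x) ∈ pow A n → x ∈ rootInf (shift A c) := by
    intro n
    induction n with
    | zero =>
      intro x hx
      rw [mem_pow_zero.1 hx]
      exact Submodule.zero_mem _
    | succ n ih =>
      rintro x ⟨u, hu, hux⟩
      cases n with
      | zero =>
        obtain rfl := mem_pow_zero.1 hu
        exact rootInf_step (mem_shift.2 (by simpa using hux)) (Submodule.zero_mem _)
      | succ n =>
        obtain ⟨v, w, -, hw, hwv, hv⟩ := exists_twist c n u x hu hux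
        exact rootInf_step (mem_shift.2 hv) (ih v ⟨w, hw, hwv⟩)
  intro x hx
  obtain ⟨n, hn⟩ := mem_rootInf.1 hx
  exact key n x hn

lemma mem_singChain_of_mem {A : LinRel H} {c : ℂ} {x : H} (hx : x ∈ rootSpace A c)
    (hxi : x ∈ rootInf A) : x ∈ singChain A := by
  refine ⟨?_, hxi⟩
  obtain ⟨m, hm⟩ := mem_rootSpace.1 hx
  obtain ⟨n, hn⟩ := mem_rootInf.1 (rootInf_le_shift A c hxi)
  refine mem_of_singular (B := shift A c) (c := -c) ?_ m n x hn hm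
  intro a b hab hb
  -- `(A - c) - (-c) = A`
  have := mem_shift.1 hab
  exact rootSpace_step (y := b) (by simpa using this) hb

/-! ### Independence of root spaces modulo an invariant subspace -/

/-- Let `N` be invariant under `A`, so that `A` induces a partial operator on `H ⧸ N`. A vector of
the root space at `c` that is an eigenvector modulo `N` for the eigenvalue `c + d ≠ c` lies in
`N`. -/
lemma mem_of_eigen_mod {A : LinRel H} {N : Submodule ℂ H}
    (hN : ∀ x y, (x, y) ∈ A → x ∈ N → y ∈ N) {c d : ℂ} (hd : d ≠ 0) (n : ℕ) :
    ∀ x z : H, (x, z + c • x) ∈ A → z - d • x ∈ N → (z, (0 : H)) ∈ pow (shift A c) n → x ∈ N := by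
  induction n with
  | zero =>
    intro x z _ hz h0
    rw [← mem_pow_zero.1 h0, zero_sub, Submodule.neg_mem_iff] at hz
    exact (N.smul_mem_iff hd).1 hz
  | succ n ih =>
    intro x z hxz hz h0
    obtain ⟨z', hz', h0'⟩ := mem_pow_succ_left.1 h0
    rw [mem_shift] at hz'
    have h1 : z' + c • z - d • (z + c • x) ∈ N := hN _ _ (A.sub_mem hz' (A.smul_mem d hxz)) hz
    have h2 : z' - d • z ∈ N := by
      have := N.sub_mem h1 (N.smul_mem c hz)
      convert this using 1
      module
    have hzN := ih z z' hz' h2 h0'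
    have := N.sub_mem hzN hz
    rw [sub_sub_cancel] at this
    exact (N.smul_mem_iff hd).1 this

/-- Vectors from the root spaces at distinct points whose sum lies in the `A`-invariant subspace
`N` all lie in `N`. -/
lemma mem_of_sum_mem {A : LinRel H} {N : Submodule ℂ H}
    (hN : ∀ x y, (x, y) ∈ A → x ∈ N → y ∈ N) {ι : Type*} {lam : ι → ℂ}
    (hlam : Function.Injective lam) (S : Finset ι) :
    ∀ x : ι → H, (∀ r, x r ∈ rootSpace A (lam r)) → ∑ r ∈ S, x r ∈ N → ∀ r ∈ S, x r ∈ N := by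
  classical
  induction S using Finset.induction_on with
  | empty => simp
  | insert s S hs ihS =>
    have key : ∀ (n : ℕ) (x : ι → H), (∀ r, x r ∈ rootSpace A (lam r)) →
        (x s, (0 : H)) ∈ pow (shift A (lam s)) n → x s + ∑ r ∈ S, x r ∈ N →
        ∀ r ∈ S, x r ∈ N := by
      intro n
      induction n with
      | zero =>
        intro x hx hxs hsum
        rw [← mem_pow_zero.1 hxs, zero_add] at hsum
        exact ihS x hx hsum
      | succ n ih =>
        intro x hx hxs hsum
        obtain ⟨t, hst, ht⟩ := mem_pow_succ_left.1 hxs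
        rw [mem_shift] at hst
        choose z hz hxz using fun r => exists_rootSpace_step (hx r)
        -- Apply `A - lam s` to every summand: this shortens the chain at `s`.
        let y : ι → H := fun r => if r = s then t else z r - (lam s - lam r) • x r
        have hys : y s = t := if_pos rfl
        have hyS : ∀ r ∈ S, y r = z r - (lam s - lam r) • x r := fun r hr =>
          if_neg (fun h : r = s => hs (h ▸ hr))
        have hy : ∀ r, y r ∈ rootSpace A (lam r) := by
          intro r
          by_cases h : r = s
          · subst h
            rw [hys]
            exact mem_rootSpace.2 ⟨n, ht⟩
          · simp only [y, if_neg h]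
            exact Submodule.sub_mem _ (hz r) (Submodule.smul_mem _ _ (hx r))
        have hA : (x s + ∑ r ∈ S, x r,
            (t + lam s • x s) + ∑ r ∈ S, (z r + lam r • x r)) ∈ A := by
          have h1 : ∑ r ∈ S, (x r, z r + lam r • x r) ∈ A := A.sum_mem fun r _ => hxz r
          have h2 := A.add_mem hst h1
          convert h2 using 1
          ext <;> simp [Prod.fst_sum, Prod.snd_sum]
        have hysum : y s + ∑ r ∈ S, y r ∈ N := by
          have h2 := N.sub_mem (hN _ _ hA hsum) (N.smul_mem (lam s) hsum)
          convert h2 using 1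
          rw [hys, Finset.sum_congr rfl hyS, smul_add, Finset.smul_sum]
          simp only [Finset.sum_sub_distrib, Finset.sum_add_distrib, sub_smul]
          abel
        intro r hr
        have hyr := ih y hy (by rwa [hys]) hysum r hr
        rw [hyS r hr] at hyr
        obtain ⟨m, hm⟩ := mem_rootSpace.1 (hz r)
        refine mem_of_eigen_mod hN (sub_ne_zero.2 fun h => hs ?_) m (x r) (z r) (hxz r) hyr hm
        rwa [hlam h]
    intro x hx hsum
    rw [Finset.sum_insert hs] at hsum
    obtain ⟨n, hn⟩ := mem_rootSpace.1 (hx s)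
    have hS := key n x hx hn hsum
    have hxs : x s ∈ N := (N.add_mem_iff_left (N.sum_mem hS)).1 hsum
    intro r hr
    rcases Finset.mem_insert.1 hr with rfl | hr
    · exact hxs
    · exact hS r hr

end LinRel

/-- if `x^r ∈ R_{λ_r}(A)` for pairwise distinct `λ_1, …, λ_l ∈ ℂ`
and `∑ x^r ∈ R_μ(A)` with `μ ∉ {λ_1, …, λ_l}`, then every `x^r ∈ R_c(A)`. -/
theorem statement_12 (A : LinRel H) (l : ℕ) (lam : Fin l → ℂ)
    (hdist : Function.Injective lam) (mu : ℂ) (hmu : mu ∉ Set.range lam)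
    (x : Fin l → H)
    (hx : ∀ r, x r ∈ LinRel.rootSpace A (lam r))
    (hsum : ∑ r, x r ∈ LinRel.rootSpace A mu) :
    ∀ r, x r ∈ LinRel.singChain A := by
  classical
  let lam' : Option (Fin l) → ℂ := fun o => o.elim mu lam
  let x' : Option (Fin l) → H := fun o => o.elim (-∑ r, x r) x
  have hinj : Function.Injective lam' := by
    rintro (_ | a) (_ | b) h
    · rfl
    · exact absurd ⟨b, h.symm⟩ hmu
    · exact absurd ⟨a, h⟩ hmu
    · exact congrArg some (hdist h)
  have hx' : ∀ o, x' o ∈ LinRel.rootSpace A (lam' o) := by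
    rintro (_ | r)
    · exact Submodule.neg_mem _ hsum
    · exact hx r
  have hsum' : ∑ o, x' o ∈ LinRel.rootInf A := by
    rw [Fintype.sum_option]
    simp [x']
  intro r
  exact LinRel.mem_singChain_of_mem (hx r)
    (LinRel.mem_of_sum_mem (fun _ _ => LinRel.rootInf_step) hinj Finset.univ x' hx' hsum'
      (some r) (Finset.mem_univ _))
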